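/- arXiv:1510.08667 — 3 statements merged into one kernel-verified Lean document; each statement's English description precedes it below -/
import Mathlib

section
/- Mean value theorem for iterated finite differences: let k be a positive integer, r > 0, and let f : [0,∞) → ℝ be continuous on [0,∞) and k times continuously differentiable on (0,∞). Then there exists ζ ∈ (0, kr) such that Σ_{m=0}^k C(k,m)(−1)^{k−m} f(mr) = r^k f^{(k)}(ζ). -/
open Set Finset

/-!
The operator `Δ_r^(k+1)` is `Δ_r^k` applied to `x ↦ f (x + r) - f x`. By induction on `k` the
iterated difference at `0` therefore equals `r ^ k * (f⁽ᵏ⁾ (ζ + r) - f⁽ᵏ⁾ ζ)` for some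
`ζ ∈ (0, k r)`, and the mean value theorem for `f⁽ᵏ⁾` on `[ζ, ζ + r]` supplies the remaining factor
`r * f⁽ᵏ⁺¹⁾ ξ` with `ξ ∈ (ζ, ζ + r) ⊆ (0, (k + 1) r)`. Continuity at `0` is only used in the base
case, the ordinary mean value theorem on `[0, r]`. This is `fwdDiff_iter_mean_value`, stated for a
sequence `g 0, g 1, …` of successive derivatives so that the induction hypothesis applies to the
shifted differences without computing their iterated derivatives.
-/

/-- Mean value theorem for the iterated difference of `g 0`, where `g (i + 1)` is the derivative of
`g i` on `(0, ∞)`. -/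
theorem fwdDiff_iter_mean_value (r : ℝ) (hr : 0 < r) (k : ℕ) (g : ℕ → ℝ → ℝ)
    (hc : ContinuousOn (g 0) (Ici 0))
    (hd : ∀ i < k + 1, ∀ x : ℝ, 0 < x → HasDerivAt (g i) (g (i + 1) x) x) :
    ∃ ζ ∈ Ioo (0 : ℝ) ((k + 1 : ℕ) * r),
      (fwdDiff r)^[k + 1] (g 0) 0 = r ^ (k + 1) * g (k + 1) ζ := by
  induction k generalizing g with
  | zero =>
    obtain ⟨ζ, hζ, h⟩ := exists_hasDerivAt_eq_slope (g 0) (g 1) hr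
      (hc.mono Icc_subset_Ici_self) (fun x hx => hd 0 (by simp) x hx.1)
    refine ⟨ζ, by simpa using hζ, ?_⟩
    simp only [zero_add, Function.iterate_one, fwdDiff, pow_one, h, sub_zero]
    field_simp
  | succ k ih =>
    obtain ⟨ζ, hζ, h⟩ := ih (fun i x => g i (x + r) - g i x)
      ((hc.comp (by fun_prop) (fun x hx => by
        simp only [Set.mem_Ici] at hx ⊢; linarith)).sub hc)
      (fun i hi x hx => ((hd i (by omega) (x + r) (by linarith)).comp_add_const x r).sub
        (hd i (by omega) x hx))
    have hpos : ∀ x ∈ Icc ζ (ζ + r), 0 < x := fun x hx => hζ.1.trans_le hx.1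
    obtain ⟨ξ, hξ, h'⟩ := exists_hasDerivAt_eq_slope (g (k + 1)) (g (k + 1 + 1))
      (show ζ < ζ + r by linarith)
      (fun x hx => (hd (k + 1) (by omega) x (hpos x hx)).continuousAt.continuousWithinAt)
      (fun x hx => hd (k + 1) (by omega) x (hpos x (Ioo_subset_Icc_self hx)))
    refine ⟨ξ, ⟨hζ.1.trans hξ.1, ?_⟩, ?_⟩
    · have h1 := hζ.2
      have h2 := hξ.2
      push_cast at h1 ⊢
      linarith
    · rw [Function.iterate_succ_apply]
      refine h.trans ?_
      rw [h', add_sub_cancel_left, pow_succ r (k + 1)]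
      field_simp

/-- Mean value theorem for iterated finite differences: if `f : ℝ → ℝ` is continuous
on `[0,∞)` and `k` times continuously differentiable on `(0,∞)`, then for every `r > 0`
there is `ζ ∈ (0, kr)` with `Δ_r^k(f)(0) = r^k f^{(k)}(ζ)`. -/
theorem stmt2 (k : ℕ) (hk : 1 ≤ k) (r : ℝ) (hr : 0 < r) (f : ℝ → ℝ)
    (hf₀ : ContinuousOn f (Ici 0)) (hf : ContDiffOn ℝ k f (Ioi 0)) :
    ∃ ζ ∈ Ioo (0:ℝ) (k * r),
      ∑ m ∈ Finset.range (k + 1), (k.choose m : ℝ) * (-1 : ℝ) ^ (k - m) * f (m * r) =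
        r ^ k * iteratedDerivWithin k f (Ioi 0) ζ := by
  obtain ⟨n, rfl⟩ : ∃ n, k = n + 1 := ⟨k - 1, by omega⟩
  obtain ⟨ζ, hζ, h⟩ := fwdDiff_iter_mean_value r hr n
    (fun i => iteratedDerivWithin i f (Ioi 0))
    (by simpa only [iteratedDerivWithin_zero] using hf₀)
    (fun i hi x hx => by
      have hdiff := hf.differentiableOn_iteratedDerivWithin (m := i) (by exact_mod_cast hi)
        (uniqueDiffOn_Ioi 0) x hx
      have := hdiff.hasDerivWithinAt
      rw [← iteratedDerivWithin_succ] at this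
      exact this.hasDerivAt (Ioi_mem_nhds hx))
  refine ⟨ζ, hζ, Eq.trans ?_ h⟩
  simp only [iteratedDerivWithin_zero]
  rw [fwdDiff_iter_eq_sum_shift]
  refine Finset.sum_congr rfl fun m _ => ?_
  simp only [zero_add, nsmul_eq_mul, zsmul_eq_mul]
  push_cast
  ring
end

section
/- Let k be a positive integer and suppose α > 0 is either not an integer or satisfies α > k. Then there exists θ ∈ (0,1) such that S(k,α) = α(α−1)⋯(α−k+1)·(θk)^{α−k}; in particular S(k,α) ≠ 0. -/
/-!
`S(k,α)` is the `k`-th forward difference with step `1` at `0` of the function `x ↦ x ^ α`; the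
`m = 0` term, which is missing from the definition of `S`, vanishes because `α > 0`. A forward
difference of order `k ≥ 1` equals the `k`-th derivative at some interior point `ξ ∈ (0, k)`
(`exists_fwdDiff_iter_eq`), and the `k`-th derivative of `x ^ α` is
`α(α−1)⋯(α−k+1) x ^ (α−k)`; so `θ = ξ / k` works. No differentiability at `0` is needed: as in the
usual mean value theorem, continuity on the closed interval suffices. The product has no zero factor
as `α ≠ j` for all `j < k`.
-/

open Finset

/-- `S(k,α) = Σ_{m=1}^k C(k,m) (−1)^(k−m) m^α`. -/
noncomputable def S (k : ℕ) (α : ℝ) : ℝ :=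
  ∑ m ∈ Finset.Icc 1 k, (k.choose m : ℝ) * (-1 : ℝ) ^ (k - m) * (m : ℝ) ^ α

/-- Mean value theorem for forward differences of order `n + 1`. Here `F j` is the `j`-th derivative
of `F 0` on the open interval; at the end points only continuity of `F 0` is assumed. -/
theorem exists_fwdDiff_iter_eq (n : ℕ) (F : ℕ → ℝ → ℝ) (a : ℝ)
    (hc : ContinuousOn (F 0) (Set.Icc a (a + (n + 1))))
    (hd : ∀ j ≤ n, ∀ x ∈ Set.Ioo a (a + (n + 1)), HasDerivAt (F j) (F (j + 1) x) x) :
    ∃ ξ ∈ Set.Ioo a (a + (n + 1)), (fwdDiff (1 : ℝ))^[n + 1] (F 0) a = F (n + 1) ξ := by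
  induction n generalizing F with
  | zero =>
    simp only [Nat.cast_zero, zero_add] at hc hd ⊢
    obtain ⟨ξ, hξ, h⟩ := exists_hasDerivAt_eq_slope (F 0) (F 1) (by linarith) hc
      (fun x hx => hd 0 le_rfl x hx)
    refine ⟨ξ, hξ, ?_⟩
    rw [h]
    simp [fwdDiff]
  | succ n ih =>
    push_cast at hc hd ⊢
    -- The induction hypothesis for the differences `x ↦ F j (x + 1) - F j x` rewrites the left side
    -- as `F (n + 1) (ξ + 1) - F (n + 1) ξ`, to which the mean value theorem applies.
    obtain ⟨ξ, hξ, h⟩ := ih (fun j => fwdDiff (1 : ℝ) (F j))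
      (by
        refine ContinuousOn.sub (hc.comp (by fun_prop) ?_) (hc.mono ?_)
        · intro x hx
          constructor <;> linarith [hx.1, hx.2]
        · intro x hx
          constructor <;> linarith [hx.1, hx.2])
      (by
        intro j hj x hx
        refine HasDerivAt.sub ?_ (hd j (by omega) x ⟨hx.1, by linarith [hx.2]⟩)
        exact (hd j (by omega) (x + 1)
          ⟨by linarith [hx.1], by linarith [hx.2]⟩).comp_add_const x 1)
    have hd' : ∀ x ∈ Set.Icc ξ (ξ + 1), HasDerivAt (F (n + 1)) (F (n + 1 + 1) x) x := fun x hx =>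
      hd (n + 1) le_rfl x ⟨by linarith [hx.1, hξ.1], by linarith [hx.2, hξ.2]⟩
    obtain ⟨η, hη, h'⟩ := exists_hasDerivAt_eq_slope (F (n + 1)) (F (n + 1 + 1))
      (by linarith : ξ < ξ + 1) (fun x hx => (hd' x hx).continuousAt.continuousWithinAt)
      (fun x hx => hd' x (Set.Ioo_subset_Icc_self hx))
    refine ⟨η, ⟨by linarith [hη.1, hξ.1], by linarith [hη.2, hξ.2]⟩, ?_⟩
    rw [Function.iterate_succ_apply, h, h']
    simp [fwdDiff]

theorem S_eq_fwdDiff_iter (k : ℕ) {α : ℝ} (hα : 0 < α) :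
    S k α = (fwdDiff (1 : ℝ))^[k] (fun x : ℝ => x ^ α) 0 := by
  rw [fwdDiff_iter_eq_sum_shift, Finset.sum_range_succ', S.eq_def,
    ← Finset.Ico_succ_right_eq_Icc, Finset.sum_Ico_eq_sum_range]
  simp [Real.zero_rpow hα.ne', add_comm, mul_comm]

/-- If `α > 0` is not an integer, or `α > k`, then there is `θ ∈ (0,1)` with
`S(k,α) = α(α−1)⋯(α−k+1)·(θk)^(α−k)`; in particular `S(k,α) ≠ 0`. -/
theorem stmt3 (k : ℕ) (hk : 1 ≤ k) (α : ℝ) (hα : 0 < α)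
    (h : (∀ n : ℕ, α ≠ n) ∨ (k : ℝ) < α) :
    (∃ θ : ℝ, θ ∈ Set.Ioo (0:ℝ) 1 ∧
      S k α = (∏ j ∈ Finset.range k, (α - j)) * (θ * k) ^ (α - k)) ∧ S k α ≠ 0 := by
  have hne : ∀ j ∈ Finset.range k, α - j ≠ 0 := by
    intro j hj
    rw [sub_ne_zero]
    rcases h with h | h
    · exact h j
    · have : (j : ℝ) < k := by exact_mod_cast Finset.mem_range.mp hj
      exact (this.trans h).ne'
  have hk0 : (0 : ℝ) < k := by exact_mod_cast hk
  have key : ∃ θ : ℝ, θ ∈ Set.Ioo (0:ℝ) 1 ∧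
      S k α = (∏ j ∈ Finset.range k, (α - j)) * (θ * k) ^ (α - k) := by
    obtain ⟨n, rfl⟩ : ∃ n, k = n + 1 := ⟨k - 1, by omega⟩
    obtain ⟨ξ, hξ, hS⟩ := exists_fwdDiff_iter_eq n
      (fun j x => (∏ i ∈ Finset.range j, (α - i)) * x ^ (α - j)) 0
      (by simpa using (Real.continuous_rpow_const hα.le).continuousOn)
      (by
        intro j _ x hx
        have := (Real.hasDerivAt_rpow_const (p := α - j) (Or.inl hx.1.ne')).const_mul
          (∏ i ∈ Finset.range j, (α - i))
        refine this.congr_deriv ?_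
        rw [Finset.prod_range_succ]
        push_cast
        rw [sub_sub, mul_assoc])
    rw [zero_add] at hξ
    push_cast at hk0 ⊢
    refine ⟨ξ / (n + 1), ⟨div_pos hξ.1 hk0, (div_lt_one hk0).2 hξ.2⟩, ?_⟩
    rw [div_mul_cancel₀ _ hk0.ne', S_eq_fwdDiff_iter _ hα]
    simpa using hS
  refine ⟨key, ?_⟩
  obtain ⟨θ, hθ, hS⟩ := key
  rw [hS]
  exact mul_ne_zero (Finset.prod_ne_zero_iff.2 hne) (Real.rpow_pos_of_pos (mul_pos hθ.1 hk0) _).ne'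
end

section
/- Integral representation of iterated differences: let k be a positive integer and let φ : ℝ^d → ℂ be k times continuously differentiable. Then for all η, ξ ∈ ℝ^d, Δ_ξ^k(φ)(η) / k! = Σ_{|σ|=k} (ξ^σ / σ!) ∫_{[0,1]^k} (∂^σ φ)(η + (θ₁ + ⋯ + θ_k)ξ) dθ₁⋯dθ_k, where the sum is over multi-indices σ ∈ ℤ₊^d with |σ| = k. -/
/-!
Restricted to the line `s ↦ η + s ξ`, the iterated difference of `φ` is the `k`-th difference with
step `1` of a function `ψ` of one real variable. By induction on `k`, that difference is the
integral of `ψ^(k)(θ₁ + ⋯ + θ_k)` over the unit cube: `ψ(· + 1) - ψ` is again of class `C^k`, the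
fundamental theorem of calculus turns its `k`-th derivative into an integral of `ψ^(k+1)` over
`[0,1]`, and Fubini puts the new variable into the cube (`fwdDiff_iter_eq_integral`).

By the chain rule `ψ^(k)(s)` is the `k`-th Fréchet derivative `D^k φ(η + s ξ)` evaluated at
`(ξ, …, ξ)`. Expanding `ξ` in the standard basis by multilinearity gives a sum over words
`f : Fin k → Fin d`. Since partial derivatives commute (`dl_perm`), a word contributes only
through its letter counts `σ`, and by the multinomial theorem there are `k! / σ!` words with letter
counts `σ` (`sum_words`). Hence `D^k φ(x)(ξ, …, ξ) = ∑ k!/σ! ξ^σ ∂^σ φ(x)`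
(`iteratedFDeriv_diag`), and dividing by `k!` yields the claim.

Symmetry of `D^k φ` for `φ` merely of class `C^k` is derived from symmetry of second derivatives:
directional derivatives along a list of vectors are invariant under adjacent swaps, hence under
permutations of the list.
-/

open MeasureTheory Real Set Finset

/-- The `k`-th iterated forward difference of `φ` with increment `ξ`, evaluated at `η`:
`Δ_ξ^k(φ)(η) = Σ_{m=0}^k C(k,m)(−1)^(k−m) φ(η + mξ)`. -/
noncomputable def iterDiffAt {d : ℕ} (k : ℕ) (φ : EuclideanSpace ℝ (Fin d) → ℂ)
    (ξ η : EuclideanSpace ℝ (Fin d)) : ℂ :=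
  ∑ m ∈ Finset.range (k + 1), (k.choose m : ℂ) * (-1 : ℂ) ^ (k - m) * φ (η + (m : ℝ) • ξ)

/-- The list of basis vectors of `ℝ^d` where the `i`-th one is repeated `σ i` times. -/
noncomputable def basisList (d : ℕ) (σ : Fin d → ℕ) : List (EuclideanSpace ℝ (Fin d)) :=
  (List.finRange d).flatMap fun i => List.replicate (σ i) (EuclideanSpace.single i (1 : ℝ))

/-- The partial derivative `∂^σ φ` of order `k = |σ|`, realized as the `k`-th iterated
Fréchet derivative applied to the basis vectors with multiplicities `σ`. -/
noncomputable def mpderiv {d : ℕ} (k : ℕ) (σ : Fin d → ℕ)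
    (φ : EuclideanSpace ℝ (Fin d) → ℂ) (x : EuclideanSpace ℝ (Fin d)) : ℂ :=
  iteratedFDeriv ℝ k φ x (fun j : Fin k => (basisList d σ).getD j 0)


/-- The iterated directional derivative of `φ` along the vectors of a list. The head of the list is
the last direction of differentiation. Junk values of `fderiv` do not occur as long as `φ` is of
class `C^n` with `n` at least the length of the list. -/
noncomputable def dl {E : Type*} [NormedAddCommGroup E] [NormedSpace ℝ E] (φ : E → ℂ) :
    List E → E → ℂ
  | [] => φ
  | v :: l => fun x => fderiv ℝ (dl φ l) x v

section
variable {E : Type*} [NormedAddCommGroup E] [NormedSpace ℝ E]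

lemma dl_contDiff {φ : E → ℂ} (l : List E) (n : ℕ) (h : ContDiff ℝ ((n + l.length : ℕ)) φ) :
    ContDiff ℝ n (dl φ l) := by
  induction l generalizing n with
  | nil => simpa [dl] using h
  | cons v l ih =>
    have h1 : ContDiff ℝ ((n + 1 : ℕ)) (dl φ l) := ih (n + 1) (by
      rwa [List.length_cons, ← Nat.add_assoc, Nat.add_right_comm] at h)
    exact (h1.fderiv_right (m := n) (by norm_cast)).clm_apply contDiff_const

/-- Directional derivatives commute: a permutation of the list is a composition of adjacent swaps,
and each swap is the symmetry of a second derivative. -/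
lemma dl_perm {φ : E → ℂ} {l l' : List E} (hl : l.Perm l')
    (h : ContDiff ℝ (l.length : ℕ) φ) : dl φ l = dl φ l' := by
  induction hl with
  | nil => rfl
  | cons v _ ih =>
    have := ih (h.of_le (by simp))
    simp only [dl, this]
  | swap v w l =>
    have h2 : ContDiff ℝ (2 : ℕ) (dl φ l) := dl_contDiff l 2 (by
      rwa [List.length_cons, List.length_cons, Nat.add_assoc, Nat.add_comm] at h)
    have hd : Differentiable ℝ (fderiv ℝ (dl φ l)) :=
      (h2.fderiv_right (m := 1) (by norm_num)).differentiable (by norm_num)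
    funext x
    have hs : IsSymmSndFDerivAt ℝ (dl φ l) x := h2.contDiffAt.isSymmSndFDerivAt (by simp)
    have key (a b : E) : fderiv ℝ (fun y => fderiv ℝ (dl φ l) y a) x b
        = fderiv ℝ (fderiv ℝ (dl φ l)) x b a := by
      rw [fderiv_clm_apply (hd x) (by fun_prop)]
      simp
    simp only [dl]
    rw [key, key]
    exact hs.eq _ _
  | trans h1 _ ih1 ih2 =>
    exact (ih1 h).trans (ih2 (by rwa [← h1.length_eq]))

/-- The encoding of the arguments by `List.getD` is the one used in `mpderiv`. -/
lemma iteratedFDeriv_getD {φ : E → ℂ} {k : ℕ} (hφ : ContDiff ℝ k φ) (l : List E)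
    (hl : l.length = k) (x : E) :
    iteratedFDeriv ℝ k φ x (fun j : Fin k => l.getD j 0) = dl φ l x := by
  induction l generalizing k x with
  | nil => subst hl; simp [dl]
  | cons v l ih =>
    subst hl
    rw [List.length_cons, iteratedFDeriv_succ_apply_left]
    have hd : DifferentiableAt ℝ (iteratedFDeriv ℝ l.length φ) x :=
      (hφ.differentiable_iteratedFDeriv (by simp only [List.length_cons]; norm_cast; omega)) x
    have : dl φ l = fun y => iteratedFDeriv ℝ l.length φ y (fun j => l.getD j 0) :=
      funext fun y => (ih (hφ.of_le (by simp)) rfl y).symm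
    simp only [dl, this]
    rw [fderiv_continuousMultilinear_apply_const_apply hd]
    rfl
end

lemma count_ofFn_eq_sum {α : Type*} [DecidableEq α] {k : ℕ} (f : Fin k → α) (a : α) :
    (List.ofFn f).count a = ∑ j, if f j = a then 1 else 0 := by
  induction k with
  | zero => simp
  | succ k ih =>
    rw [List.ofFn_succ, List.count_cons, ih, Fin.sum_univ_succ, Nat.add_comm]
    simp

/-- A sum over words in which `g` sees only the letter counts is a sum over count vectors, each
weighted by the number of words that realize it. -/
lemma sum_words {d : ℕ} (k : ℕ) (c : Fin d → ℂ) (g : (Fin d → ℕ) → ℂ) :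
    ∑ f : Fin k → Fin d, (∏ j, c (f j)) * g (fun a => (List.ofFn f).count a) =
      ∑ σ ∈ Finset.Nat.antidiagonalTuple d k,
        (Nat.multinomial Finset.univ σ : ℂ) * (∏ i, c i ^ σ i) * g σ := by
  -- `L` sends `X^s` to `g s`. Applying it to two expansions of `(∑ i, c i X_i)^k`, over words and
  -- by the multinomial theorem, gives the two sides.
  let L : MvPolynomial (Fin d) ℂ →ₗ[ℂ] ℂ :=
    (MvPolynomial.basisMonomials (Fin d) ℂ).constr ℂ (fun s => g s)
  have hL (s : Fin d →₀ ℕ) (a : ℂ) : L (MvPolynomial.monomial s a) = a * g s := by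
    have : MvPolynomial.monomial s a = a • MvPolynomial.basisMonomials (Fin d) ℂ s := by
      simp [MvPolynomial.smul_monomial]
    rw [this, map_smul, Module.Basis.constr_basis, smul_eq_mul]
  have h1 := Finset.sum_pow_eq_sum_piAntidiag (Finset.univ : Finset (Fin d))
    (fun i => MvPolynomial.monomial (Finsupp.single i 1) (c i)) k
  have h2 : (∑ i : Fin d, MvPolynomial.monomial (Finsupp.single i 1) (c i)) ^ k =
      ∑ f : Fin k → Fin d, ∏ j, MvPolynomial.monomial (Finsupp.single (f j) 1) (c (f j)) := by
    rw [← Fin.prod_const, Finset.prod_univ_sum]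
    simp
  rw [h2] at h1
  have h3 := congrArg L h1
  simp only [map_sum] at h3
  rw [piAntidiag_univ_fin_eq_antidiagonalTuple] at h3
  convert! h3 using 2 with f _ σ _
  · rw [← MvPolynomial.monomial_sum_prod, hL]
    congr 2
    funext a
    simp [Finsupp.single_apply, count_ofFn_eq_sum]
  · simp only [MvPolynomial.monomial_pow]
    rw [← MvPolynomial.monomial_sum_prod,
      ← nsmul_eq_mul (Nat.multinomial Finset.univ σ) (MvPolynomial.monomial _ _),
      map_nsmul, hL, nsmul_eq_mul, mul_assoc]
    congr 3
    funext a
    simp [Finsupp.single_apply]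
/-- Fubini on the unit cube, splitting off the first coordinate. -/
lemma integral_cube_succ (n : ℕ) {G : ℝ → ℂ} (hG : Continuous G) :
    ∫ θ : Fin (n + 1) → ℝ in Set.univ.pi fun _ => Set.Icc (0 : ℝ) 1, G (∑ i, θ i) =
      ∫ θ : Fin n → ℝ in Set.univ.pi fun _ => Set.Icc (0 : ℝ) 1,
        ∫ s in (0 : ℝ)..1, G (s + ∑ i, θ i) := by
  have hmp := (volume_preserving_piFinSuccAbove (fun _ : Fin (n + 1) => ℝ) 0).symm
  rw [← hmp.setIntegral_preimage_emb (MeasurableEquiv.measurableEmbedding _)]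
  have hpre : (MeasurableEquiv.piFinSuccAbove (fun _ : Fin (n + 1) => ℝ) 0).symm ⁻¹'
      (Set.univ.pi fun _ => Set.Icc (0 : ℝ) 1) =
      Set.Icc (0 : ℝ) 1 ×ˢ (Set.univ.pi fun _ : Fin n => Set.Icc (0 : ℝ) 1) := by
    ext ⟨s, θ⟩
    simp only [Set.mem_preimage, Set.mem_univ_pi, Set.mem_prod]
    rw [Fin.forall_fin_succ]
    simp [MeasurableEquiv.piFinSuccAbove]
  have hint : ∀ p : ℝ × (Fin n → ℝ),
      G (∑ i, (MeasurableEquiv.piFinSuccAbove (fun _ : Fin (n + 1) => ℝ) 0).symm p i) =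
        G (p.1 + ∑ i, p.2 i) := by
    rintro ⟨s, θ⟩
    rw [Fin.sum_univ_succ]
    simp [MeasurableEquiv.piFinSuccAbove]
  rw [hpre]
  simp only [hint]
  rw [Measure.volume_eq_prod, ← setIntegral_prod_swap, setIntegral_prod]
  · simp only [Prod.fst_swap, Prod.snd_swap]
    refine integral_congr_ae (.of_forall fun θ => ?_)
    simp only
    rw [intervalIntegral.integral_of_le zero_le_one, integral_Icc_eq_integral_Ioc]
  · refine ContinuousOn.integrableOn_compact ?_ (by fun_prop)
    exact (isCompact_univ_pi fun _ => isCompact_Icc).prod isCompact_Icc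

/-- The one-dimensional case of the integral representation, without the factorial. -/
lemma fwdDiff_iter_eq_integral (k : ℕ) {ψ : ℝ → ℂ} (hψ : ContDiff ℝ k ψ) (t : ℝ) :
    (fwdDiff (1 : ℝ))^[k] ψ t =
      ∫ θ : Fin k → ℝ in Set.univ.pi fun _ => Set.Icc (0 : ℝ) 1,
        iteratedDeriv k ψ (t + ∑ i, θ i) := by
  induction k generalizing ψ with
  | zero => simp [Measure.real]
  | succ k ih =>
    have hk : ContDiff ℝ k ψ := hψ.of_le (by norm_cast; omega)
    have hs : ContDiff ℝ k (fun z => ψ (z + 1)) := hk.comp (contDiff_id.add contDiff_const)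
    have hd : Differentiable ℝ (iteratedDeriv k ψ) :=
      hψ.differentiable_iteratedDeriv k (by norm_cast; omega)
    have hc : Continuous (iteratedDeriv (k + 1) ψ) := hψ.continuous_iteratedDeriv _ le_rfl
    have hΔ : fwdDiff 1 ψ = (fun z => ψ (z + 1)) - ψ := rfl
    rw [Function.iterate_succ_apply, ih (hΔ ▸ hs.sub hk),
      integral_cube_succ k (G := fun u => iteratedDeriv (k + 1) ψ (t + u)) (by fun_prop)]
    refine integral_congr_ae (.of_forall fun θ => ?_)
    simp only
    rw [hΔ, iteratedDeriv_sub hs.contDiffAt hk.contDiffAt, iteratedDeriv_comp_add_const]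
    have hF (s : ℝ) : HasDerivAt (fun s => iteratedDeriv k ψ (t + (s + ∑ i, θ i)))
        (iteratedDeriv (k + 1) ψ (t + (s + ∑ i, θ i))) s := by
      rw [iteratedDeriv_succ]
      have h := (hd (t + (s + ∑ i, θ i))).hasDerivAt
      exact (h.comp_const_add t (s + ∑ i, θ i)).comp_add_const s (∑ i, θ i)
    rw [intervalIntegral.integral_eq_sub_of_hasDerivAt (fun s _ => hF s)
      (Continuous.intervalIntegrable (by fun_prop) _ _)]
    simp only [zero_add, add_assoc, add_comm (1 : ℝ)]

lemma iteratedDeriv_line {d k : ℕ} {φ : EuclideanSpace ℝ (Fin d) → ℂ} (hφ : ContDiff ℝ k φ)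
    (η ξ : EuclideanSpace ℝ (Fin d)) (t : ℝ) :
    iteratedDeriv k (fun s : ℝ => φ (η + s • ξ)) t =
      iteratedFDeriv ℝ k φ (η + t • ξ) (fun _ => ξ) := by
  have h : ContDiff ℝ k (fun z => φ (η + z)) := hφ.comp (contDiff_const.add contDiff_id)
  have := (ContinuousLinearMap.toSpanSingleton ℝ ξ).iteratedFDeriv_comp_right h t le_rfl
  have hcomp : (fun s : ℝ => φ (η + s • ξ)) =
      (fun z => φ (η + z)) ∘ ContinuousLinearMap.toSpanSingleton ℝ ξ := by
    ext s; simp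
  rw [iteratedDeriv_eq_iteratedFDeriv, hcomp, this, iteratedFDeriv_comp_add_left]
  simp

lemma iterDiffAt_eq_fwdDiff {d : ℕ} (k : ℕ) (φ : EuclideanSpace ℝ (Fin d) → ℂ)
    (ξ η : EuclideanSpace ℝ (Fin d)) :
    iterDiffAt k φ ξ η = (fwdDiff (1 : ℝ))^[k] (fun s : ℝ => φ (η + s • ξ)) 0 := by
  rw [fwdDiff_iter_eq_sum_shift, iterDiffAt]
  refine Finset.sum_congr rfl fun m _ => ?_
  simp [zsmul_eq_mul, mul_comm]

lemma count_flatMap_replicate {d : ℕ} (σ : Fin d → ℕ) (a : Fin d) :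
    ((List.finRange d).flatMap fun i => List.replicate (σ i) i).count a = σ a := by
  rw [List.count_flatMap, ← List.ofFn_eq_map, List.sum_ofFn]
  simp [List.count_replicate]

lemma basisList_perm {d k : ℕ} (f : Fin k → Fin d) :
    (List.ofFn fun j => EuclideanSpace.single (f j) (1 : ℝ)).Perm
      (basisList d fun a => (List.ofFn f).count a) := by
  have h : (List.ofFn f).Perm ((List.finRange d).flatMap fun i =>
      List.replicate ((List.ofFn f).count i) i) :=
    List.perm_iff_count.2 fun a => (count_flatMap_replicate (fun i => (List.ofFn f).count i) a).symm
  have h2 := h.map fun i => EuclideanSpace.single i (1 : ℝ)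
  simpa [List.map_flatMap, List.map_ofFn, Function.comp_def, basisList] using h2

lemma iteratedFDeriv_single_eq_mpderiv {d k : ℕ} {φ : EuclideanSpace ℝ (Fin d) → ℂ}
    (hφ : ContDiff ℝ k φ) (f : Fin k → Fin d) (x : EuclideanSpace ℝ (Fin d)) :
    iteratedFDeriv ℝ k φ x (fun j => EuclideanSpace.single (f j) (1 : ℝ)) =
      mpderiv k (fun a => (List.ofFn f).count a) φ x := by
  have hp := basisList_perm f
  have hlen := hp.length_eq
  rw [List.length_ofFn] at hlen
  rw [mpderiv, iteratedFDeriv_getD hφ _ hlen.symm, ← dl_perm hp (by simpa using hφ),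
    ← iteratedFDeriv_getD hφ _ (by simp)]
  congr 1
  funext j
  simp

/-- The multinomial formula for the `k`-th differential on the diagonal. -/
lemma iteratedFDeriv_diag {d k : ℕ} {φ : EuclideanSpace ℝ (Fin d) → ℂ}
    (hφ : ContDiff ℝ k φ) (ξ x : EuclideanSpace ℝ (Fin d)) :
    iteratedFDeriv ℝ k φ x (fun _ => ξ) =
      ∑ σ ∈ Finset.Nat.antidiagonalTuple d k,
        (Nat.multinomial Finset.univ σ : ℂ) * (∏ i, (ξ i : ℂ) ^ σ i) * mpderiv k σ φ x := by
  have hξ : ξ = ∑ i, ξ i • EuclideanSpace.single i (1 : ℝ) := by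
    ext j
    simp [Finset.sum_apply, Pi.single_apply]
  conv_lhs => rw [hξ]
  rw [ContinuousMultilinearMap.map_sum, ← sum_words k (fun i => (ξ i : ℂ))]
  refine Finset.sum_congr rfl fun f _ => ?_
  rw [ContinuousMultilinearMap.map_smul_univ, iteratedFDeriv_single_eq_mpderiv hφ]
  simp

/-- Integral representation of iterated differences: for `φ` of class `C^k` on `ℝ^d` and
all `η, ξ`, `Δ_ξ^k(φ)(η)/k! = Σ_{|σ|=k} (ξ^σ/σ!) ∫_{[0,1]^k} (∂^σ φ)(η + (θ₁+⋯+θ_k)ξ) dθ`. -/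
theorem stmt12 (d : ℕ) (k : ℕ) (hk : 1 ≤ k) (φ : EuclideanSpace ℝ (Fin d) → ℂ)
    (hφ : ContDiff ℝ k φ) (η ξ : EuclideanSpace ℝ (Fin d)) :
    iterDiffAt k φ ξ η / (Nat.factorial k : ℂ) =
      ∑ σ ∈ Finset.Nat.antidiagonalTuple d k,
        ((∏ i, ((ξ i : ℂ) ^ σ i)) / (∏ i, (Nat.factorial (σ i) : ℂ))) *
          ∫ θ : Fin k → ℝ in Set.univ.pi fun _ => Set.Icc (0:ℝ) 1,
            mpderiv k σ φ (η + (∑ i, θ i) • ξ) := by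
  have hψ : ContDiff ℝ k (fun s : ℝ => φ (η + s • ξ)) :=
    hφ.comp (contDiff_const.add (contDiff_id.smul contDiff_const))
  have hint (σ : Fin d → ℕ) : IntegrableOn
      (fun θ : Fin k → ℝ => mpderiv k σ φ (η + (∑ i, θ i) • ξ))
      (Set.univ.pi fun _ => Set.Icc (0 : ℝ) 1) := by
    refine ContinuousOn.integrableOn_compact (isCompact_univ_pi fun _ => isCompact_Icc) ?_
    have hc : Continuous fun x => iteratedFDeriv ℝ k φ x
        (fun j : Fin k => (basisList d σ).getD j 0) :=
      (ContinuousMultilinearMap.apply ℝ _ ℂ _).continuous.comp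
        (hφ.continuous_iteratedFDeriv le_rfl)
    exact (hc.comp (by fun_prop : Continuous fun θ : Fin k → ℝ =>
      η + (∑ i, θ i) • ξ)).continuousOn
  rw [iterDiffAt_eq_fwdDiff, fwdDiff_iter_eq_integral k hψ]
  simp only [iteratedDeriv_line hφ, zero_add, iteratedFDeriv_diag hφ]
  rw [integral_finsetSum _ fun σ _ => (hint σ).const_mul _, Finset.sum_div]
  refine Finset.sum_congr rfl fun σ hσ => ?_
  rw [integral_const_mul]
  have hm : (∏ i, (Nat.factorial (σ i) : ℂ)) * Nat.multinomial Finset.univ σ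
      = Nat.factorial k := by
    have := Nat.multinomial_spec Finset.univ σ
    rw [Finset.Nat.mem_antidiagonalTuple.1 hσ] at this
    exact_mod_cast this
  have h1 : (Nat.factorial k : ℂ) ≠ 0 := by exact_mod_cast Nat.factorial_ne_zero k
  have h2 : (∏ i, (Nat.factorial (σ i) : ℂ)) ≠ 0 :=
    Finset.prod_ne_zero_iff.2 fun i _ => by exact_mod_cast Nat.factorial_ne_zero _
  rw [div_mul_eq_mul_div, div_eq_div_iff h1 h2, ← hm]
  ring
end
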